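/- Let R be a left coherent ring of finite left global dimension. Then the canonical triangulated functor D(mod R) → D(Mod R) induced by the inclusion of finitely presented modules into all modules is fully faithful, and its essential image is the full subcategory of complexes all of whose cohomology modules are finitely presented. -/

import Mathlib

open CategoryTheory CategoryTheory.Limits

/-!
A complex `Y` whose cohomology is finitely presented is isomorphic in the derived category to a
K-projective complex with finitely presented terms. To see this, choose epimorphisms `P n ⟶ Hⁿ Y`
with `P n` projective and finitely presented. They lift to a morphism `⨁ P n⟦-n⟧ ⟶ Y` which is epi
on cohomology, so the cohomology of its cocone consists of the kernels of the `P n ⟶ Hⁿ Y`, and one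
concludes by induction on a bound for the projective dimension; no boundedness of `Y` is needed.
Such a model comes from a complex over the subcategory, which gives the essential image. Morphisms
out of a K-projective complex are homotopy classes, which agree in the subcategory and in the
ambient category, so the model also gives full faithfulness.
-/

section ZeroDifferential

variable {C : Type*} [Category* C] [Abelian C]

/-- The identification of a cochain complex with zero differential with its own cohomology. -/
noncomputable def homologyIsoOfDEqZero (K : CochainComplex C ℤ) (hK : ∀ i j, K.d i j = 0) (n : ℤ) :
    K.homology n ≅ K.X n :=
  have := K.isIso_iCycles n (n + 1) (by simp) (hK _ _)
  have := K.isIso_homologyπ (n - 1) n (by simp) (hK _ _)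
  (asIso (K.homologyπ n)).symm ≪≫ asIso (K.iCycles n)

lemma homologyπ_homologyIsoOfDEqZero_hom (K : CochainComplex C ℤ) (hK : ∀ i j, K.d i j = 0)
    (n : ℤ) : K.homologyπ n ≫ (homologyIsoOfDEqZero K hK n).hom = K.iCycles n := by
  simp [homologyIsoOfDEqZero]

lemma isKProjective_of_d_eq_zero (K : CochainComplex C ℤ) [∀ n, Projective (K.X n)]
    (hK : ∀ i j, K.d i j = 0) : K.IsKProjective where
  nonempty_homotopy_zero {L} f hL := by
    have factors_through_d (i j : ℤ) (hji : (ComplexShape.up ℤ).Rel j i) :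
        ∃ h : K.X i ⟶ L.X j, h ≫ L.d j i = f.f i := by
      have hex : (L.sc' j i (i + 1)).Exact :=
        (L.exactAt_iff' j i (i + 1) ((ComplexShape.up ℤ).prev_eq' hji) (by simp)).1 (hL i)
      have hf : f.f i ≫ L.d i (i + 1) = 0 := by simp [hK]
      exact ⟨hex.liftFromProjective (f.f i) hf, hex.liftFromProjective_comp (f.f i) hf⟩
    choose h hh using factors_through_d
    have hf : f = Homotopy.nullHomotopicMap' h := by
      ext i
      rw [Homotopy.nullHomotopicMap'_f (k₂ := i - 1) (k₁ := i) (k₀ := i + 1) (by simp) (by simp),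
        hh, hK, zero_comp, zero_add]
    exact ⟨(Homotopy.ofEq hf).trans (Homotopy.nullHomotopy' h)⟩

lemma exists_homologyMap_eq_of_d_eq_zero {K L : CochainComplex C ℤ} [∀ n, Projective (K.X n)]
    (hK : ∀ i j, K.d i j = 0) (p : ∀ n, K.X n ⟶ L.homology n) :
    ∃ φ : K ⟶ L,
      ∀ n, HomologicalComplex.homologyMap φ n = (homologyIsoOfDEqZero K hK n).hom ≫ p n := by
  let c (n : ℤ) : K.X n ⟶ L.cycles n := Projective.factorThru (p n) (L.homologyπ n)
  let φ : K ⟶ L := { f := fun n => c n ≫ L.iCycles n, comm' := by simp [hK] }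
  refine ⟨φ, fun n => ?_⟩
  have hφ : HomologicalComplex.cyclesMap φ n = K.iCycles n ≫ c n := by
    rw [← cancel_mono (L.iCycles n), HomologicalComplex.cyclesMap_i, Category.assoc]
  rw [← cancel_epi (K.homologyπ n), HomologicalComplex.homologyπ_naturality, hφ, Category.assoc,
    Projective.factorThru_comp, ← homologyπ_homologyIsoOfDEqZero_hom K hK, Category.assoc]

/-- The cochain complex with given terms and zero differential; in the derived category it is
the sum of the shifts `X n⟦-n⟧`. -/
def zeroDifferential (X : ℤ → C) : CochainComplex C ℤ where
  X := X
  d _ _ := 0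

variable [HasDerivedCategory C]

open DerivedCategory

/-- The cohomology of a complex with zero differential, computed in the derived category. -/
noncomputable def zeroDifferentialHomologyIso (X : ℤ → C) (n : ℤ) :
    (DerivedCategory.homologyFunctor C n).obj (Q.obj (zeroDifferential X)) ≅ X n :=
  (homologyFunctorFactors C n).app _ ≪≫ homologyIsoOfDEqZero _ (fun _ _ => rfl) n

lemma exists_homologyFunctor_map_eq {P : ℤ → C} [hP : ∀ n, Projective (P n)]
    {Y : DerivedCategory C} (p : ∀ n, P n ⟶ (DerivedCategory.homologyFunctor C n).obj Y) :
    ∃ φ : Q.obj (zeroDifferential P) ⟶ Y, ∀ n, (DerivedCategory.homologyFunctor C n).map φ =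
      (zeroDifferentialHomologyIso P n).hom ≫ p n := by
  have (n : ℤ) : Projective ((zeroDifferential P).X n) := hP n
  let e := Q.objObjPreimageIso Y
  obtain ⟨φ, hφ⟩ := exists_homologyMap_eq_of_d_eq_zero (K := zeroDifferential P)
    (fun _ _ => rfl) fun n =>
      p n ≫ (DerivedCategory.homologyFunctor C n).map e.inv ≫ (homologyFunctorFactors C n).hom.app _
  refine ⟨Q.map φ ≫ e.hom, fun n => ?_⟩
  have hnat := (homologyFunctorFactors C n).hom.naturality φ
  simp only [Functor.comp_map, HomologicalComplex.homologyFunctor_map, hφ] at hnat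
  rw [← cancel_mono ((DerivedCategory.homologyFunctor C n).map e.inv),
    ← cancel_mono ((homologyFunctorFactors C n).hom.app _), ← Functor.map_comp, Category.assoc,
    e.hom_inv_id, Category.comp_id, Category.assoc, Category.assoc]
  exact hnat.trans (Category.assoc _ _ _).symm

end ZeroDifferential

section KProjectiveModel

variable {C : Type*} [Category* C] [Abelian C]

open DerivedCategory Pretriangulated

lemma isKProjective_mappingCone {K L : CochainComplex C ℤ} [hK : K.IsKProjective]
    [hL : L.IsKProjective] (f : K ⟶ L) : (CochainComplex.mappingCone f).IsKProjective := by
  rw [CochainComplex.isKProjective_iff_leftOrthogonal] at hK hL ⊢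
  exact (HomotopyCategory.subcategoryAcyclic C).leftOrthogonal.ext_of_isTriangulatedClosed₃
    _ (HomotopyCategory.mappingCone_triangleh_distinguished f) hK hL

variable [HasDerivedCategory C]

lemma Q_map_surjective_of_isKProjective (K L : CochainComplex C ℤ) [K.IsKProjective] :
    Function.Surjective (Q.map : (K ⟶ L) → (Q.obj K ⟶ Q.obj L)) := by
  intro g
  obtain ⟨f', hf'⟩ := (CochainComplex.IsKProjective.Qh_map_bijective K
    ((HomotopyCategory.quotient _ _).obj L)).2
    ((quotientCompQhIso C).hom.app K ≫ g ≫ (quotientCompQhIso C).inv.app L)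
  obtain ⟨f, rfl⟩ := (HomotopyCategory.quotient _ _).map_surjective f'
  refine ⟨f, ?_⟩
  rw [← cancel_epi ((quotientCompQhIso C).hom.app K), ← quotientCompQhIso_hom_naturality, hf']
  simp

variable (W : ObjectProperty C)

/-- The objects of the derived category represented by a K-projective complex all of whose terms
satisfy `W`. -/
def hasKProjectiveModel : ObjectProperty (DerivedCategory C) := fun Y =>
  ∃ Z : CochainComplex C ℤ, Z.IsKProjective ∧ (∀ n, W (Z.X n)) ∧ Nonempty (Q.obj Z ≅ Y)

namespace hasKProjectiveModel

instance : (hasKProjectiveModel W).IsClosedUnderIsomorphisms where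
  of_iso e := fun ⟨Z, hZ, hZW, ⟨e'⟩⟩ => ⟨Z, hZ, hZW, ⟨e' ≪≫ e⟩⟩

instance [W.IsClosedUnderIsomorphisms] [W.IsClosedUnderBinaryProducts] :
    (hasKProjectiveModel W).IsTriangulatedClosed₃ := .mk' <| by
  rintro T hT ⟨K, hK, hKW, ⟨e₁⟩⟩ ⟨L, hL, hLW, ⟨e₂⟩⟩
  obtain ⟨f, hf⟩ := Q_map_surjective_of_isKProjective K L (e₁.hom ≫ T.mor₁ ≫ e₂.inv)
  have comm : Q.map f ≫ e₂.hom = e₁.hom ≫ T.mor₁ := by simp [hf]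
  refine ⟨CochainComplex.mappingCone f, isKProjective_mappingCone f, fun n => ?_, ⟨?_⟩⟩
  · exact W.prop_of_iso (HomologicalComplex.homotopyCofiber.XIsoBiprod f n (n + 1) rfl).symm
      (W.prop_of_isLimit_binaryFan (BinaryBiproduct.isLimit _ _) (hKW _) (hLW _))
  · exact Triangle.π₃.mapIso
      (isoTriangleOfIso₁₂ _ _ (mappingCone_triangle_distinguished f) hT e₁ e₂ comm)

end hasKProjectiveModel

end KProjectiveModel

section Resolution

variable {C : Type*} [Category* C] [Abelian C] [HasDerivedCategory C]

open DerivedCategory Pretriangulated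

lemma shortExact_homology_of_distTriang {T : Triangle (DerivedCategory C)} (hT : T ∈ distTriang _)
    [hepi : ∀ n, Epi ((DerivedCategory.homologyFunctor C n).map T.mor₂)] (n : ℤ) :
    (ShortComplex.mk ((DerivedCategory.homologyFunctor C n).map T.mor₁)
      ((DerivedCategory.homologyFunctor C n).map T.mor₂)
      (by rw [← Functor.map_comp, comp_distTriang_mor_zero₁₂ _ hT, Functor.map_zero])
      ).ShortExact where
  exact := HomologySequence.exact₂ _ hT n
  mono_f := (HomologySequence.mono_homologyMap_mor₁_iff _ hT (n - 1) n).2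
    ((HomologySequence.epi_homologyMap_mor₂_iff _ hT (n - 1) n).1 (hepi (n - 1)))
  epi_g := hepi n

variable {W : ObjectProperty C}

lemma hasKProjectiveModel_zeroDifferential {P : ℤ → C} [hP : ∀ n, Projective (P n)]
    (hW : ∀ n, W (P n)) : hasKProjectiveModel W (Q.obj (zeroDifferential P)) :=
  have (n : ℤ) : Projective ((zeroDifferential P).X n) := hP n
  ⟨_, isKProjective_of_d_eq_zero _ (fun _ _ => rfl), hW, ⟨Iso.refl _⟩⟩

lemma hasKProjectiveModel_of_projective_homology [W.IsClosedUnderIsomorphisms]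
    {Y : DerivedCategory C}
    [hP : ∀ n, Projective ((DerivedCategory.homologyFunctor C n).obj Y)]
    (hW : ∀ n, W ((DerivedCategory.homologyFunctor C n).obj Y)) : hasKProjectiveModel W Y := by
  obtain ⟨φ, hφ⟩ := exists_homologyFunctor_map_eq (Y := Y) fun n => 𝟙 _
  have : IsIso φ := (DerivedCategory.isIso_iff C φ).2 fun n => by
    rw [hφ, Category.comp_id]; infer_instance
  exact (hasKProjectiveModel W).prop_of_iso (asIso φ) (hasKProjectiveModel_zeroDifferential hW)

lemma exists_hom_zeroDifferential_epi
    (hepi : ∀ M, W M → ∃ (P : C) (p : P ⟶ M), W P ∧ Projective P ∧ Epi p) {Y : DerivedCategory C}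
    (hY : ∀ n, W ((DerivedCategory.homologyFunctor C n).obj Y)) :
    ∃ (P : ℤ → C) (φ : Q.obj (zeroDifferential P) ⟶ Y), (∀ n, W (P n)) ∧
      (∀ n, Projective (P n)) ∧ ∀ n, Epi ((DerivedCategory.homologyFunctor C n).map φ) := by
  choose P p hPW hP hp using fun n => hepi _ (hY n)
  obtain ⟨φ, hφ⟩ := exists_homologyFunctor_map_eq p
  exact ⟨P, φ, hPW, hP, fun n => by rw [hφ]; exact epi_comp' inferInstance (hp n)⟩

variable [W.IsClosedUnderIsomorphisms] [W.IsClosedUnderBinaryProducts] [W.IsClosedUnderKernels]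

theorem hasKProjectiveModel_of_hasProjectiveDimensionLT
    (hepi : ∀ M, W M → ∃ (P : C) (p : P ⟶ M), W P ∧ Projective P ∧ Epi p) (d : ℕ)
    (Y : DerivedCategory C) (hY : ∀ n, W ((DerivedCategory.homologyFunctor C n).obj Y))
    (hd : ∀ n, HasProjectiveDimensionLT ((DerivedCategory.homologyFunctor C n).obj Y) (d + 1)) :
    hasKProjectiveModel W Y := by
  induction d generalizing Y with
  | zero =>
    have (n : ℤ) := projective_iff_hasProjectiveDimensionLT_one.2 (hd n)
    exact hasKProjectiveModel_of_projective_homology hY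
  | succ d ih =>
    obtain ⟨P, φ, hPW, hP, hφ⟩ := exists_hom_zeroDifferential_epi hepi hY
    obtain ⟨X, α, δ, hT⟩ := distinguished_cocone_triangle₁ φ
    let e (n : ℤ) := zeroDifferentialHomologyIso P n
    have hS := shortExact_homology_of_distTriang hT (hepi := hφ)
    have hX : hasKProjectiveModel W X := by
      refine ih X (fun n => ?_) (fun n => ?_)
      · exact W.prop_of_isLimit_kernelFork (hS n).fIsKernel
          (W.prop_of_iso (e n).symm (hPW n)) (hY n)
      · exact ((hS n).hasProjectiveDimensionLT_X₃_iff d (Projective.of_iso (e n).symm (hP n))).1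
          (hd n)
    exact (hasKProjectiveModel W).ext_of_isTriangulatedClosed₃ _ hT hX
      (hasKProjectiveModel_zeroDifferential hPW)

end Resolution

section MapBijective

variable {C D : Type*} [Category* C] [Category* D]

lemma map_bijective_of_natIso {F G : C ⥤ D} (e : F ≅ G) {X Y : C}
    (hF : Function.Bijective (F.map : (X ⟶ Y) → _)) :
    Function.Bijective (G.map : (X ⟶ Y) → _) := by
  convert ((e.app X).homCongr (e.app Y)).bijective.comp hF
  ext f
  simp

lemma map_bijective_of_iso (F : C ⥤ D) {X X' Y Y' : C} (e : X ≅ X') (e' : Y ≅ Y')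
    (hF : Function.Bijective (F.map : (X ⟶ Y) → _)) :
    Function.Bijective (F.map : (X' ⟶ Y') → _) := by
  convert (((F.mapIso e).homCongr (F.mapIso e')).bijective.comp hF).comp
    (e.homCongr e').symm.bijective
  ext f
  simp

end MapBijective

section EssImage

lemma isClosedUnderKernels_of_isClosedUnderLimitsOfShape {C : Type*} [Category* C]
    [HasZeroMorphisms C] (P : ObjectProperty C)
    [P.IsClosedUnderLimitsOfShape WalkingParallelPair] : P.IsClosedUnderKernels where
  kernels_le := by
    rintro _ ⟨f, k, hk, hX, hY⟩
    exact P.prop_of_isLimit hk (by rintro (_ | _) <;> assumption)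

variable {A B : Type*} [Category* A] [Category* B] [Preadditive A] [Preadditive B]
  (ι : A ⥤ B) [ι.Additive] [ι.Full] [ι.Faithful]

lemma mapHomologicalComplex_essImage {I : Type*} {c : ComplexShape I} {K : HomologicalComplex B c}
    (hK : ∀ i, ι.essImage (K.X i)) : (ι.mapHomologicalComplex c).essImage K := by
  choose X e using hK
  let e' (i : I) := (e i).some
  let L : HomologicalComplex A c :=
    { X := X
      d := fun i j => ι.preimage ((e' i).hom ≫ K.d i j ≫ (e' j).inv)
      shape := fun i j hij => ι.map_injective (by simp [K.shape i j hij])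
      d_comp_d' := fun i j k _ _ => ι.map_injective (by simp) }
  have comm (i j : I) : (e' i).hom ≫ K.d i j = ι.map (L.d i j) ≫ (e' j).hom := by
    simp [L]
  exact ⟨L, ⟨HomologicalComplex.Hom.isoOfComponents e' fun i j _ => comm i j⟩⟩

end EssImage

section MapDerivedCategory

open DerivedCategory

variable {A B : Type*} [Category* A] [Category* B] [Abelian A] [Abelian B]
  (ι : A ⥤ B) [ι.Additive] [PreservesFiniteLimits ι] [PreservesFiniteColimits ι]

/-- An exact functor commutes with the cohomology of cochain complexes. -/
noncomputable def mapHomologicalComplexCompHomologyFunctorIso (n : ℤ) :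
    ι.mapHomologicalComplex (ComplexShape.up ℤ) ⋙ HomologicalComplex.homologyFunctor B _ n ≅
      HomologicalComplex.homologyFunctor A _ n ⋙ ι :=
  NatIso.ofComponents (fun K => (K.sc n).mapHomologyIso ι) fun f =>
    ShortComplex.mapHomologyIso_hom_naturality
      ((HomologicalComplex.shortComplexFunctor A (ComplexShape.up ℤ) n).map f) ι

lemma isKProjective_of_map [ι.Full] [ι.Faithful] (K : CochainComplex A ℤ)
    [CochainComplex.IsKProjective ((ι.mapHomologicalComplex (ComplexShape.up ℤ)).obj K)] :
    K.IsKProjective where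
  nonempty_homotopy_zero f hL :=
    ⟨ι.preimageHomotopy ((CochainComplex.IsKProjective.homotopyZero
      ((ι.mapHomologicalComplex _).map f) fun n => (hL n).map ι).trans
        (Homotopy.ofEq (Functor.map_zero _ _ _).symm))⟩

variable [HasDerivedCategory A] [HasDerivedCategory B]

/-- The functor on derived categories induced by an exact functor commutes with cohomology. -/
noncomputable def mapDerivedCategoryCompHomologyFunctorIso (n : ℤ) :
    ι.mapDerivedCategory ⋙ DerivedCategory.homologyFunctor B n ≅
      DerivedCategory.homologyFunctor A n ⋙ ι :=
  Localization.liftNatIso Q (HomologicalComplex.quasiIso A (ComplexShape.up ℤ))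
    (Q ⋙ ι.mapDerivedCategory ⋙ DerivedCategory.homologyFunctor B n)
    (Q ⋙ DerivedCategory.homologyFunctor A n ⋙ ι) _ _
    (Functor.isoWhiskerRight ι.mapDerivedCategoryFactors (DerivedCategory.homologyFunctor B n) ≪≫
      Functor.isoWhiskerLeft (ι.mapHomologicalComplex _) (homologyFunctorFactors B n) ≪≫
      mapHomologicalComplexCompHomologyFunctorIso ι n ≪≫
      (Functor.isoWhiskerRight (homologyFunctorFactors A n) ι).symm)

lemma essImage_homology_mapDerivedCategory_obj (X : DerivedCategory A) (n : ℤ) :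
    ι.essImage ((DerivedCategory.homologyFunctor B n).obj (ι.mapDerivedCategory.obj X)) :=
  ⟨_, ⟨((mapDerivedCategoryCompHomologyFunctorIso ι n).app X).symm⟩⟩

instance mapDerivedCategory_reflectsIsomorphisms [ι.ReflectsIsomorphisms] :
    ι.mapDerivedCategory.ReflectsIsomorphisms where
  reflects f _ := by
    refine (DerivedCategory.isIso_iff A f).2 fun n => ?_
    have : IsIso (ι.map ((DerivedCategory.homologyFunctor A n).map f)) :=
      (NatIso.isIso_map_iff (mapDerivedCategoryCompHomologyFunctorIso ι n) f).1
        (inferInstanceAs (IsIso ((DerivedCategory.homologyFunctor B n).map _)))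
    exact isIso_of_reflects_iso _ ι

variable [ι.Full] [ι.Faithful]

lemma mapDerivedCategory_map_bijective_of_isKProjective (K : CochainComplex A ℤ)
    [CochainComplex.IsKProjective ((ι.mapHomologicalComplex (ComplexShape.up ℤ)).obj K)]
    (X : DerivedCategory A) :
    Function.Bijective (ι.mapDerivedCategory.map : (Q.obj K ⟶ X) → _) := by
  have := isKProjective_of_map ι K
  let K' := (HomotopyCategory.quotient A (ComplexShape.up ℤ)).obj K
  let L := Qh.objPreimage X
  have hA : Function.Bijective (Qh.map : (K' ⟶ L) → _) :=
    CochainComplex.IsKProjective.Qh_map_bijective K L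
  have hB : Function.Bijective ((ι.mapHomotopyCategory (ComplexShape.up ℤ) ⋙ Qh).map :
      (K' ⟶ L) → _) :=
    (CochainComplex.IsKProjective.Qh_map_bijective
      ((ι.mapHomologicalComplex (ComplexShape.up ℤ)).obj K) _).comp
        ((Functor.FullyFaithful.ofFullyFaithful _).map_bijective _ _)
  exact map_bijective_of_iso _ ((quotientCompQhIso A).app K) (Qh.objObjPreimageIso X)
    ((hA.of_comp_iff _).1 (map_bijective_of_natIso ι.mapDerivedCategoryFactorsh.symm hB))

lemma exists_mapDerivedCategory_iso_of_hasKProjectiveModel {Y : DerivedCategory B}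
    (hY : hasKProjectiveModel ι.essImage Y) : ∃ Z : CochainComplex A ℤ,
      CochainComplex.IsKProjective ((ι.mapHomologicalComplex (ComplexShape.up ℤ)).obj Z) ∧
      Nonempty (ι.mapDerivedCategory.obj (Q.obj Z) ≅ Y) := by
  obtain ⟨K, hK, hKι, ⟨e⟩⟩ := hY
  obtain ⟨Z, ⟨e'⟩⟩ := mapHomologicalComplex_essImage ι hKι
  exact ⟨Z, CochainComplex.isKProjective_of_iso e'.symm,
    ⟨ι.mapDerivedCategoryFactors.app Z ≪≫ Q.mapIso e' ≪≫ e⟩⟩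

lemma mapDerivedCategory_map_bijective_of_hasKProjectiveModel {X : DerivedCategory A}
    (hX : hasKProjectiveModel ι.essImage (ι.mapDerivedCategory.obj X)) (X' : DerivedCategory A) :
    Function.Bijective (ι.mapDerivedCategory.map : (X ⟶ X') → _) := by
  obtain ⟨Z, hZ, ⟨e⟩⟩ := exists_mapDerivedCategory_iso_of_hasKProjectiveModel ι hX
  have bijective_Z := mapDerivedCategory_map_bijective_of_isKProjective ι Z
  obtain ⟨f, hf⟩ := (bijective_Z X).2 e.hom
  have : IsIso (ι.mapDerivedCategory.map f) := by rw [hf]; infer_instance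
  have : IsIso f := isIso_of_reflects_iso f ι.mapDerivedCategory
  exact map_bijective_of_iso _ (asIso f) (Iso.refl _) (bijective_Z X')

theorem mapDerivedCategory_full_faithful_essImage_iff
    (hmodel : ∀ Y : DerivedCategory B,
      (∀ n, ι.essImage ((DerivedCategory.homologyFunctor B n).obj Y)) →
        hasKProjectiveModel ι.essImage Y) :
    ι.mapDerivedCategory.Full ∧ ι.mapDerivedCategory.Faithful ∧
      ∀ Y, (∀ n, ι.essImage ((DerivedCategory.homologyFunctor B n).obj Y)) ↔
        ι.mapDerivedCategory.essImage Y := by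
  have bijective (X X' : DerivedCategory A) :=
    mapDerivedCategory_map_bijective_of_hasKProjectiveModel ι
      (hmodel _ (essImage_homology_mapDerivedCategory_obj ι X)) X'
  refine ⟨⟨fun {X X'} => (bijective X X').2⟩, ⟨fun {X X'} => @(bijective X X').1⟩,
    fun Y => ⟨fun hY => ?_, ?_⟩⟩
  · obtain ⟨Z, -, e⟩ := exists_mapDerivedCategory_iso_of_hasKProjectiveModel ι (hmodel Y hY)
    exact ⟨Q.obj Z, e⟩
  · rintro ⟨X, ⟨e⟩⟩ n
    exact ι.essImage.prop_of_iso ((DerivedCategory.homologyFunctor B n).mapIso e)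
      (essImage_homology_mapDerivedCategory_obj ι X n)

end MapDerivedCategory

section Transport

open DerivedCategory

variable {A B : Type*} [Category* A] [Category* B] [Abelian A] [Abelian B]
  [HasDerivedCategory A] [HasDerivedCategory B]
  (ι : A ⥤ B) [ι.Additive] [PreservesFiniteLimits ι] [PreservesFiniteColimits ι]

/-- A functor on derived categories compatible with `ι` and the localization functors is
`ι.mapDerivedCategory`. -/
noncomputable def mapDerivedCategoryIso {F : DerivedCategory A ⥤ DerivedCategory B}
    (hF : ι.mapHomologicalComplex (ComplexShape.up ℤ) ⋙ Q ≅ Q ⋙ F) : ι.mapDerivedCategory ≅ F :=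
  Localization.liftNatIso Q (HomologicalComplex.quasiIso A (ComplexShape.up ℤ))
    (Q ⋙ ι.mapDerivedCategory) (Q ⋙ F) _ _ (ι.mapDerivedCategoryFactors ≪≫ hF)

theorem full_faithful_essImage_iff_of_hasProjectiveDimensionLT [ι.Full] [ι.Faithful]
    (hepi : ∀ M, ι.essImage M → ∃ (P : B) (p : P ⟶ M), ι.essImage P ∧ Projective P ∧ Epi p)
    {d : ℕ} (hd : ∀ M, ι.essImage M → HasProjectiveDimensionLT M (d + 1))
    {F : DerivedCategory A ⥤ DerivedCategory B}
    (hF : ι.mapHomologicalComplex (ComplexShape.up ℤ) ⋙ Q ≅ Q ⋙ F) :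
    F.Full ∧ F.Faithful ∧
      ∀ Y, (∀ n, ι.essImage ((DerivedCategory.homologyFunctor B n).obj Y)) ↔ F.essImage Y := by
  let e := mapDerivedCategoryIso ι hF
  have := isClosedUnderKernels_of_isClosedUnderLimitsOfShape ι.essImage
  obtain ⟨full, faithful, essImage_iff⟩ := mapDerivedCategory_full_faithful_essImage_iff ι
    fun Y hY => hasKProjectiveModel_of_hasProjectiveDimensionLT hepi d Y hY fun n => hd _ (hY n)
  exact ⟨.of_iso e, .of_iso e, by rwa [← Functor.essImage_eq_of_natIso e]⟩

end Transport

section FinitePresentation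

universe u v

variable {R : Type u} [Ring R]

lemma essImage_iff_finitePresentation {A : Type*} [Category* A] {ι : A ⥤ ModuleCat.{v} R}
    (hima : ∀ X : A, Module.FinitePresentation R (ι.obj X))
    (himb : ∀ M : ModuleCat.{v} R, Module.FinitePresentation R M →
      ∃ X : A, Nonempty (ι.obj X ≅ M)) (M : ModuleCat.{v} R) :
    ι.essImage M ↔ Module.FinitePresentation R M := by
  refine ⟨?_, himb M⟩
  rintro ⟨X, ⟨e⟩⟩
  have := hima X
  exact Module.FinitePresentation.of_equiv e.toLinearEquiv

lemma exists_finitePresentation_projective_epi [Small.{v} R] (M : ModuleCat.{v} R)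
    [Module.Finite R M] : ∃ (P : ModuleCat.{v} R) (p : P ⟶ M),
      Module.FinitePresentation R P ∧ Projective P ∧ Epi p := by
  obtain ⟨n, f, hf⟩ := Module.Finite.exists_fin' R M
  let e := Shrink.linearEquiv R (Fin n → R)
  refine ⟨ModuleCat.of R (Shrink.{v} (Fin n → R)), ModuleCat.ofHom (f ∘ₗ e.toLinearMap),
    Module.FinitePresentation.of_equiv e.symm,
    ModuleCat.projective_of_free ((Pi.basisFun R (Fin n)).map e.symm),
    (ModuleCat.epi_iff_surjective _).2 (hf.comp e.surjective)⟩

theorem stmt_7_general [Small.{v} R]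
    (hpd : ∃ d : ℕ, ∀ M : ModuleCat.{v} R, Module.FinitePresentation R M →
      HasProjectiveDimensionLT M (d + 1))
    {𝒰 : Type*} [Category* 𝒰] [Abelian 𝒰]
    (ι : 𝒰 ⥤ ModuleCat.{v} R) [ι.Full] [ι.Faithful] [ι.Additive]
    [PreservesFiniteLimits ι] [PreservesFiniteColimits ι]
    (hima : ∀ X : 𝒰, Module.FinitePresentation R (ι.obj X))
    (himb : ∀ M : ModuleCat.{v} R, Module.FinitePresentation R M →
      ∃ X : 𝒰, Nonempty (ι.obj X ≅ M))
    [HasDerivedCategory 𝒰] [HasDerivedCategory (ModuleCat.{v} R)]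
    (F : DerivedCategory 𝒰 ⥤ DerivedCategory (ModuleCat.{v} R))
    (hF : (ι.mapHomologicalComplex (ComplexShape.up ℤ) ⋙ DerivedCategory.Q) ≅
      (DerivedCategory.Q ⋙ F)) :
    F.Full ∧ F.Faithful ∧
      ∀ Y : DerivedCategory (ModuleCat.{v} R),
        ((∀ n : ℤ, Module.FinitePresentation R
            ((DerivedCategory.homologyFunctor (ModuleCat.{v} R) n).obj Y)) ↔
          F.essImage Y) := by
  have essImage_iff := essImage_iff_finitePresentation hima himb
  obtain ⟨d, hd⟩ := hpd
  simp only [← essImage_iff] at hd ⊢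
  refine full_faithful_essImage_iff_of_hasProjectiveDimensionLT ι (fun M hM => ?_) hd hF
  have := (essImage_iff M).1 hM
  simpa only [essImage_iff] using exists_finitePresentation_projective_epi M

end FinitePresentation

/-- Let `R` be a left coherent ring of finite left global dimension.
The canonical functor `D(mod R) ⥤ D(Mod R)` (induced by the inclusion of the abelian
category of finitely presented left modules into all left modules) is fully faithful,
with essential image the complexes whose cohomology modules are all finitely presented.
Here `mod R` is formalized as any abelian category `𝒰` equipped with a fully faithful
exact functor `ι` to `ModuleCat R` whose essential image consists exactly of the
finitely presented modules, and the canonical functor as any `F` compatible with `ι`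
via the localization functors `Q`. -/
theorem stmt_7 {R : Type} [Ring R]
    (hcoh : ∀ I : Submodule R R, I.FG → Module.FinitePresentation R I)
    [HasExt.{0} (ModuleCat.{0} R)]
    (hgl : ∃ d : ℕ, ∀ M N : ModuleCat.{0} R, Subsingleton (Abelian.Ext M N (d + 1)))
    {𝒰 : Type u₁} [Category.{v₁} 𝒰] [Abelian 𝒰]
    (ι : 𝒰 ⥤ ModuleCat.{0} R) [ι.Full] [ι.Faithful] [ι.Additive]
    [PreservesFiniteLimits ι] [PreservesFiniteColimits ι]
    (hima : ∀ X : 𝒰, Module.FinitePresentation R (ι.obj X))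
    (himb : ∀ M : ModuleCat.{0} R, Module.FinitePresentation R M →
      ∃ X : 𝒰, Nonempty (ι.obj X ≅ M))
    [HasDerivedCategory 𝒰] [HasDerivedCategory (ModuleCat.{0} R)]
    (F : DerivedCategory 𝒰 ⥤ DerivedCategory (ModuleCat.{0} R))
    (hF : (ι.mapHomologicalComplex (ComplexShape.up ℤ) ⋙ DerivedCategory.Q) ≅
      (DerivedCategory.Q ⋙ F)) :
    F.Full ∧ F.Faithful ∧
      ∀ Y : DerivedCategory (ModuleCat.{0} R),
        ((∀ n : ℤ, Module.FinitePresentation R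
            ((DerivedCategory.homologyFunctor (ModuleCat.{0} R) n).obj Y)) ↔
          F.essImage Y) :=
  stmt_7_general (hgl.imp fun d hd M _ =>
    hasProjectiveDimensionLT_of_enoughInjectives M (d + 1) (hd M))
    ι hima himb F hF
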